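/- Suppose f \in L^1_+(R^d)\setminus\{0\} satisfies f * \psi_\eps(v) = \exp(\mu + \lambda^{(1)}\cdot v + (\lambda^{(2)}/2)|v|^2) for all v, where \lambda^{(2)} < 0 and \eps|\lambda^{(2)}| < 1. Then f is the Maxwellian f(v) = \rho (2\pi T)^{-d/2}\exp(-|v-u|^2/(2T)) with T = 1/|\lambda^{(2)}| - \eps > 0 and u = \lambda^{(1)}/|\lambda^{(2)}|. -/

import Mathlib

open MeasureTheory Real
open scoped RealInnerProductSpace


/-- Gaussian density with mean `u` and covariance `s I`. -/
noncomputable def gaussDens (d : ℕ) (s : ℝ) (u v : EuclideanSpace ℝ (Fin d)) : ℝ :=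
  (2 * π * s) ^ (-(d : ℝ) / 2) * Real.exp (-‖v - u‖ ^ 2 / (2 * s))

lemma gaussDens_integrable (d : ℕ) (s : ℝ) (hs : 0 < s) (u : EuclideanSpace ℝ (Fin d)) :
    Integrable (gaussDens d s u) := by
  have h1 : Integrable (fun v : EuclideanSpace ℝ (Fin d) =>
      Complex.exp (-((1 / (2 * s) : ℝ) : ℂ) * ‖v‖ ^ 2 + 0 * ((⟪u, v⟫ : ℝ) : ℂ))) :=
    GaussianFourier.integrable_cexp_neg_mul_sq_norm_add
      (by rw [Complex.ofReal_re]; positivity) 0 u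
  have h2 := ((h1.re).comp_sub_right u).const_mul ((2 * π * s) ^ (-(d : ℝ) / 2))
  refine h2.congr (Filter.Eventually.of_forall fun v => ?_)
  have : (-((1 / (2 * s) : ℝ) : ℂ) * ‖v - u‖ ^ 2 + 0 * ((⟪u, v - u⟫ : ℝ) : ℂ))
      = ((-‖v - u‖ ^ 2 / (2 * s) : ℝ) : ℂ) := by
    push_cast; ring
  simp only [gaussDens]
  rw [this, ← Complex.ofReal_exp]
  rfl

lemma gaussDens_fourier (d : ℕ) (s : ℝ) (hs : 0 < s) (u t : EuclideanSpace ℝ (Fin d)) :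
    ∫ v, (gaussDens d s u v : ℂ) * Complex.exp (((⟪v, t⟫ : ℝ) : ℂ) * Complex.I) =
      Complex.exp (((⟪u, t⟫ : ℝ) : ℂ) * Complex.I) * Complex.exp (-(s * ‖t‖ ^ 2 / 2 : ℝ)) := by
  have hs' : (s : ℂ) ≠ 0 := by exact_mod_cast hs.ne'
  rw [← integral_add_right_eq_self _ u]
  have h1 : ∀ v : EuclideanSpace ℝ (Fin d), (gaussDens d s u (v + u) : ℂ) *
      Complex.exp (((⟪v + u, t⟫ : ℝ) : ℂ) * Complex.I) =
      (((2 * π * s) ^ (-(d : ℝ) / 2) : ℝ) : ℂ) *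
        Complex.exp (((⟪u, t⟫ : ℝ) : ℂ) * Complex.I) *
      Complex.exp (-((1 / (2 * s) : ℝ) : ℂ) * ‖v‖ ^ 2 + Complex.I * ((⟪t, v⟫ : ℝ) : ℂ)) := by
    intro v
    simp only [gaussDens, add_sub_cancel_right]
    rw [inner_add_left, real_inner_comm t v]
    rw [Complex.ofReal_mul, Complex.ofReal_exp]
    generalize (2 * π * s) ^ (-(d : ℝ) / 2) = A
    rw [mul_assoc, mul_assoc, ← Complex.exp_add, ← Complex.exp_add]
    congr 2
    push_cast
    ring
  simp_rw [h1]
  rw [integral_const_mul, GaussianFourier.integral_cexp_neg_mul_sq_norm_add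
      (by rw [Complex.ofReal_re]; positivity)]
  have h2 : ((π : ℂ) / ((1 / (2 * s) : ℝ) : ℂ)) ^
      ((Module.finrank ℝ (EuclideanSpace ℝ (Fin d)) : ℂ) / 2) =
      (((2 * π * s) ^ ((d : ℝ) / 2) : ℝ) : ℂ) := by
    rw [Complex.ofReal_cpow (by positivity), finrank_euclideanSpace_fin]
    congr 1
    · push_cast; field_simp
    · push_cast; rfl
  rw [h2]
  have h3 : (((2 * π * s) ^ (-(d : ℝ) / 2) : ℝ) : ℂ) * (((2 * π * s) ^ ((d : ℝ) / 2) : ℝ) : ℂ)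
      = 1 := by
    rw [← Complex.ofReal_mul, ← Real.rpow_add (by positivity)]
    rw [show -(d : ℝ) / 2 + (d : ℝ) / 2 = 0 by ring]
    simp
  have h4 : Complex.I ^ 2 * (‖t‖ : ℂ) ^ 2 / (4 * ((1 / (2 * s) : ℝ) : ℂ)) =
      -((s * ‖t‖ ^ 2 / 2 : ℝ) : ℂ) := by
    rw [Complex.I_sq]; push_cast; field_simp; ring
  rw [h4]
  linear_combination (Complex.exp (((⟪u, t⟫ : ℝ) : ℂ) * Complex.I) *
    Complex.exp (-(s * ‖t‖ ^ 2 / 2 : ℝ))) * h3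

lemma integrable_mul_char (d : ℕ) (f : EuclideanSpace ℝ (Fin d) → ℝ) (hf : Integrable f)
    (t : EuclideanSpace ℝ (Fin d)) :
    Integrable (fun v => (f v : ℂ) * Complex.exp (((⟪v, t⟫ : ℝ) : ℂ) * Complex.I)) := by
  refine hf.ofReal.mul_bdd (c := 1) ?_ (Filter.Eventually.of_forall fun v => ?_)
  · exact Continuous.aestronglyMeasurable (by fun_prop)
  · rw [Complex.norm_exp_ofReal_mul_I]

/-- Uniqueness: nonnegative integrable functions with equal Fourier transforms agree a.e. -/
lemma ae_eq_of_fourier (d : ℕ) (f g : EuclideanSpace ℝ (Fin d) → ℝ) (hf : Integrable f)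
    (hg : Integrable g) (hf0 : ∀ v, 0 ≤ f v) (hg0 : ∀ v, 0 ≤ g v)
    (h : ∀ t : EuclideanSpace ℝ (Fin d),
      ∫ v, (f v : ℂ) * Complex.exp (((⟪v, t⟫ : ℝ) : ℂ) * Complex.I) =
      ∫ v, (g v : ℂ) * Complex.exp (((⟪v, t⟫ : ℝ) : ℂ) * Complex.I)) :
    f =ᵐ[volume] g := by
  have key : ∀ k : EuclideanSpace ℝ (Fin d) → ℝ, Integrable k → (∀ v, 0 ≤ k v) → ∀ t,
      charFun (volume.withDensity fun v => ENNReal.ofReal (k v)) t =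
      ∫ v, (k v : ℂ) * Complex.exp (((⟪v, t⟫ : ℝ) : ℂ) * Complex.I) := by
    intro k hk hk0 t
    rw [charFun_apply, integral_withDensity_eq_integral_toReal_smul₀
      hk.aemeasurable.ennreal_ofReal (by simp)]
    refine integral_congr_ae (Filter.Eventually.of_forall fun v => ?_)
    simp [ENNReal.toReal_ofReal (hk0 v)]
  haveI := isFiniteMeasure_withDensity_ofReal hf.2
  haveI := isFiniteMeasure_withDensity_ofReal hg.2
  have hm : (volume.withDensity fun v => ENNReal.ofReal (f v)) =
      volume.withDensity fun v => ENNReal.ofReal (g v) := by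
    apply Measure.ext_of_charFun
    funext t
    rw [key f hf hf0, key g hg hg0, h]
  have := (withDensity_eq_iff_of_sigmaFinite hf.aemeasurable.ennreal_ofReal
    hg.aemeasurable.ennreal_ofReal).1 hm
  filter_upwards [this] with v hv
  exact (ENNReal.ofReal_eq_ofReal_iff (hf0 v) (hg0 v)).1 hv

lemma fourier_conv (d : ℕ) (f g h : EuclideanSpace ℝ (Fin d) → ℝ) (hf : Integrable f)
    (hg : Integrable g) (hh : ∀ v, ∫ y, f y * g (v - y) = h v) (t : EuclideanSpace ℝ (Fin d)) :
    ∫ v, (h v : ℂ) * Complex.exp (((⟪v, t⟫ : ℝ) : ℂ) * Complex.I) =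
      (∫ v, (f v : ℂ) * Complex.exp (((⟪v, t⟫ : ℝ) : ℂ) * Complex.I)) *
      ∫ v, (g v : ℂ) * Complex.exp (((⟪v, t⟫ : ℝ) : ℂ) * Complex.I) := by
  have := integral_convolution (ContinuousLinearMap.mul ℝ ℂ)
    (integrable_mul_char d f hf t) (integrable_mul_char d g hg t)
  rw [ContinuousLinearMap.mul_apply'] at this
  rw [← this]
  refine integral_congr_ae (Filter.Eventually.of_forall fun v => ?_)
  simp only [convolution_def, ContinuousLinearMap.mul_apply']
  rw [← hh v, ← integral_complex_ofReal, ← integral_mul_const]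
  refine integral_congr_ae (Filter.Eventually.of_forall fun y => ?_)
  have : Complex.exp (((⟪v, t⟫ : ℝ) : ℂ) * Complex.I) =
      Complex.exp (((⟪y, t⟫ : ℝ) : ℂ) * Complex.I) *
      Complex.exp (((⟪v - y, t⟫ : ℝ) : ℂ) * Complex.I) := by
    rw [← Complex.exp_add, inner_sub_left]
    congr 1
    push_cast
    ring
  simp only [this]
  push_cast
  ring

/-- Gaussian deconvolution: if `f ∈ L¹₊ \ {0}` satisfies
`(f ∗ ψ_ε)(v) = exp(μ + λ¹⋅v + (λ²/2)|v|²)` with `λ² < 0` and `ε|λ²| < 1`, then `f` is the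
Maxwellian with temperature `T = 1/|λ²| − ε` and mean velocity `u = λ¹/|λ²|`. -/
theorem deconvolution_maxwellian (d : ℕ) (hd : 1 ≤ d) (ε : ℝ) (hε : 0 < ε)
    (ψ : EuclideanSpace ℝ (Fin d) → ℝ)
    (hψ : ψ = fun v => (2 * π * ε) ^ (-(d : ℝ) / 2) * Real.exp (-‖v‖ ^ 2 / (2 * ε)))
    (f : EuclideanSpace ℝ (Fin d) → ℝ) (hf : Integrable f) (hfpos : ∀ v, 0 ≤ f v)
    (hfne : ¬ (f =ᵐ[volume] 0))
    (μ lam2 : ℝ) (lam1 : EuclideanSpace ℝ (Fin d))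
    (hlam2 : lam2 < 0) (hsmall : ε * |lam2| < 1)
    (hconv : ∀ v, ∫ y, f y * ψ (v - y) =
      Real.exp (μ + ⟪lam1, v⟫ + lam2 / 2 * ‖v‖ ^ 2)) :
    ∃ ρ : ℝ, 0 < ρ ∧
      f =ᵐ[volume] fun v =>
        ρ * (2 * π * (1 / |lam2| - ε)) ^ (-(d : ℝ) / 2) *
          Real.exp (-‖v - |lam2|⁻¹ • lam1‖ ^ 2 / (2 * (1 / |lam2| - ε))) := by
  have hL : |lam2| = -lam2 := abs_of_neg hlam2
  have hLpos : 0 < |lam2| := abs_pos.2 hlam2.ne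
  generalize |lam2| = L at *
  obtain rfl : lam2 = -L := by linarith
  have hT : 0 < 1 / L - ε := by
    rw [sub_pos, lt_div_iff₀ hLpos]; exact hsmall
  have hS : 0 < 1 / L := by positivity
  have hψ' : ψ = gaussDens d ε 0 := by
    rw [hψ]; funext v; simp [gaussDens]
  set C : ℝ := Real.exp (μ + ‖lam1‖ ^ 2 / (2 * L)) with hC
  set ρ : ℝ := C * (2 * π * (1 / L)) ^ ((d : ℝ) / 2) with hρ
  have hρpos : 0 < ρ := by positivity
  have hrhs : ∀ v, Real.exp (μ + ⟪lam1, v⟫ + -L / 2 * ‖v‖ ^ 2) =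
      ρ * gaussDens d (1 / L) (L⁻¹ • lam1) v := by
    intro v
    have h3 : (2 * π * (1 / L)) ^ ((d : ℝ) / 2) * (2 * π * (1 / L)) ^ (-(d : ℝ) / 2) = 1 := by
      rw [← Real.rpow_add (by positivity), show (d : ℝ) / 2 + -(d : ℝ) / 2 = 0 by ring]
      simp
    have h4 : Real.exp (μ + ⟪lam1, v⟫ + -L / 2 * ‖v‖ ^ 2) =
        C * Real.exp (-‖v - L⁻¹ • lam1‖ ^ 2 / (2 * (1 / L))) := by
      rw [hC, ← Real.exp_add]
      congr 1
      rw [norm_sub_sq_real, inner_smul_right, norm_smul, mul_pow, Real.norm_eq_abs, sq_abs,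
        real_inner_comm]
      field_simp
      ring
    rw [h4, hρ, gaussDens]
    linear_combination (-C * Real.exp (-‖v - L⁻¹ • lam1‖ ^ 2 / (2 * (1 / L)))) * h3
  have hg0 : ∀ v, 0 ≤ ρ * gaussDens d (1 / L - ε) (L⁻¹ • lam1) v := by
    intro v
    unfold gaussDens
    positivity
  have main : f =ᵐ[volume] fun v => ρ * gaussDens d (1 / L - ε) (L⁻¹ • lam1) v := by
    refine ae_eq_of_fourier d f _ hf ((gaussDens_integrable d _ hT _).const_mul ρ) hfpos hg0 ?_
    intro t
    have hc := fourier_conv d f ψ (fun v => ρ * gaussDens d (1 / L) (L⁻¹ • lam1) v) hf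
      (hψ' ▸ gaussDens_integrable d ε hε 0) (fun v => by rw [hconv, hrhs]) t
    rw [hψ', gaussDens_fourier d ε hε] at hc
    simp only [Complex.ofReal_mul ρ, mul_assoc, integral_const_mul] at hc ⊢
    rw [gaussDens_fourier d _ hS] at hc
    rw [gaussDens_fourier d _ hT]
    have e1 : Complex.exp (-((1 / L * ‖t‖ ^ 2 / 2 : ℝ) : ℂ)) =
        Complex.exp (-(((1 / L - ε) * ‖t‖ ^ 2 / 2 : ℝ) : ℂ)) *
          Complex.exp (-((ε * ‖t‖ ^ 2 / 2 : ℝ) : ℂ)) := by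
      rw [← Complex.exp_add]
      congr 1
      push_cast
      ring
    rw [e1] at hc
    have hne := Complex.exp_ne_zero (-((ε * ‖t‖ ^ 2 / 2 : ℝ) : ℂ))
    apply mul_right_cancel₀ hne
    simp only [inner_zero_left, Complex.ofReal_zero, zero_mul, Complex.exp_zero, one_mul] at hc
    rw [← hc]
    ring
  refine ⟨ρ, hρpos, main.trans (Filter.Eventually.of_forall fun v => ?_)⟩
  simp only [gaussDens]
  ring
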